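/- arXiv:2605.14778 — 4 statements merged into one kernel-verified Lean document; each statement's English description precedes it below -/
import Mathlib

section
/- (General Simonenko localization principle) Let P ∈ Ψ_T(H), i.e., P is a bounded operator on H such that M_φ P M_ψ is compact for all φ, ψ ∈ C(T) with disjoint supports, and assume that the representation C(T) → B(H) has the property of strong convergence to 0. Then P is locally invertible on T if, and only if, P is Fredholm. -/
open Filter Topology

/-- A bounded operator on a Hilbert space is Fredholm if it is invertible modulo
compact operators (Atkinson's theorem). -/
def IsFredholm {H : Type*} [NormedAddCommGroup H] [InnerProductSpace ℂ H] [CompleteSpace H]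
    (P : H →L[ℂ] H) : Prop :=
  ∃ S : H →L[ℂ] H,
    IsCompactOperator ⇑(S.comp P - ContinuousLinearMap.id ℂ H) ∧
    IsCompactOperator ⇑(P.comp S - ContinuousLinearMap.id ℂ H)

/-- The inclusion `ℝ → ℂ` as a continuous map, used to regard a continuous real-valued
function as a continuous complex-valued one. -/
noncomputable def ofRealCM : C(ℝ, ℂ) := ⟨Complex.ofReal, Complex.continuous_ofReal⟩

/-- `P` is locally invertible at `x ∈ T` (with respect to the representation `π` of
`C(T)`): there are a neighbourhood `V` of `x` and bounded operators `Q₁, Q₂` with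
`Q₁ P M_f = M_f = M_f P Q₂` for every `f ∈ C(T)` supported in `V`. -/
def LocallyInvertibleAt {T : Type*} [TopologicalSpace T]
    {H : Type*} [NormedAddCommGroup H] [InnerProductSpace ℂ H] [CompleteSpace H]
    (π : C(T, ℂ) →⋆ₐ[ℂ] (H →L[ℂ] H)) (P : H →L[ℂ] H) (x : T) : Prop :=
  ∃ V ∈ 𝓝 x, ∃ Q₁ Q₂ : H →L[ℂ] H, ∀ f : C(T, ℂ), tsupport f ⊆ V →
    Q₁.comp (P.comp (π f)) = π f ∧ (π f).comp (P.comp Q₂) = π f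

/-- The representation `π` of `C(T)` has the property of strong convergence to `0`:
for every `x ∈ T`, `h ∈ H` and `ε > 0` there is a neighbourhood `V` of `x` such that
`‖M_χ h‖ < ε` for every continuous `χ : T → [0,1]` equal to `1` near `x` and
supported in `V`. -/
def StrongConvergenceToZero {T : Type*} [TopologicalSpace T]
    {H : Type*} [NormedAddCommGroup H] [InnerProductSpace ℂ H] [CompleteSpace H]
    (π : C(T, ℂ) →⋆ₐ[ℂ] (H →L[ℂ] H)) : Prop :=
  ∀ (x : T) (h : H) (ε : ℝ), 0 < ε → ∃ V ∈ 𝓝 x,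
    ∀ χ : C(T, ℝ), (∀ t, χ t ∈ Set.Icc (0 : ℝ) 1) →
      (∀ᶠ t in 𝓝 x, χ t = 1) → tsupport χ ⊆ V →
      ‖π (ofRealCM.comp χ) h‖ < ε

set_option linter.unusedSectionVars false
namespace Simonenko

section
variable {T : Type*} [TopologicalSpace T] [CompactSpace T] [T2Space T]
  {H : Type*} [NormedAddCommGroup H] [InnerProductSpace ℂ H] [CompleteSpace H]

/-- The restriction of the representation to real-valued functions. -/
noncomputable def rho (π : C(T, ℂ) →⋆ₐ[ℂ] (H →L[ℂ] H)) : C(T, ℝ) →+* (H →L[ℂ] H) where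
  toFun f := π (ofRealCM.comp f)
  map_one' := by
    rw [← map_one π]; congr 1 <;> (ext t; simp [ofRealCM])
  map_mul' f g := by
    rw [← map_mul π]; congr 1; ext t; simp [ofRealCM]
  map_zero' := by
    rw [← map_zero π]; congr 1 <;> (ext t; simp [ofRealCM])
  map_add' f g := by
    rw [← map_add π]; congr 1; ext t; simp [ofRealCM]

lemma rho_apply (π : C(T, ℂ) →⋆ₐ[ℂ] (H →L[ℂ] H)) (f : C(T, ℝ)) :
    rho π f = π (ofRealCM.comp f) := rfl

lemma rho_star (π : C(T, ℂ) →⋆ₐ[ℂ] (H →L[ℂ] H)) (f : C(T, ℝ)) :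
    star (rho π f) = rho π f := by
  rw [rho_apply, ← map_star π]; congr 1; ext t; simp [ofRealCM]

lemma rho_norm_le (π : C(T, ℂ) →⋆ₐ[ℂ] (H →L[ℂ] H)) (f : C(T, ℝ)) {c : ℝ} (hc : 0 ≤ c)
    (h : ∀ t, |f t| ≤ c) : ‖rho π f‖ ≤ c := by
  rw [rho_apply]
  refine (NonUnitalStarAlgHom.norm_apply_le π _).trans ?_
  rw [ContinuousMap.norm_le _ hc]
  intro t
  simpa [ofRealCM] using h t

lemma tsupport_ofReal (f : C(T, ℝ)) : tsupport (ofRealCM.comp f) = tsupport f := by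
  unfold tsupport
  congr 1
  ext t
  simp [ofRealCM]

lemma rho_sum_sq (π : C(T, ℂ) →⋆ₐ[ℂ] (H →L[ℂ] H)) {ι : Type*} (s : Finset ι)
    (a : ι → C(T, ℝ)) {c : ℝ} (h : ∀ t, ∑ j ∈ s, (a j t) ^ 2 ≤ c ^ 2) (v : H) :
    ∑ j ∈ s, ‖rho π (a j) v‖ ^ 2 ≤ c ^ 2 * ‖v‖ ^ 2 := by
  have key : ∀ j, ((‖rho π (a j) v‖ ^ 2 : ℝ) : ℂ) = inner ℂ v (rho π (a j ^ 2) v) := by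
    intro j
    rw [pow_two (a j), map_mul, mul_apply_eq_comp,
      ← ContinuousLinearMap.adjoint_inner_left, ← ContinuousLinearMap.star_eq_adjoint, rho_star,
      inner_self_eq_norm_sq_to_K]
    simp
  have h2 : ((∑ j ∈ s, ‖rho π (a j) v‖ ^ 2 : ℝ) : ℂ)
      = inner ℂ v (rho π (∑ j ∈ s, a j ^ 2) v) := by
    rw [Complex.ofReal_sum, map_sum, sum_apply, inner_sum]
    exact Finset.sum_congr rfl fun j _ => key j
  have h3 : ‖((∑ j ∈ s, ‖rho π (a j) v‖ ^ 2 : ℝ) : ℂ)‖ = ∑ j ∈ s, ‖rho π (a j) v‖ ^ 2 := by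
    rw [Complex.norm_real, Real.norm_of_nonneg]
    exact Finset.sum_nonneg fun _ _ => by positivity
  rw [← h3, h2]
  have h4 : ‖rho π (∑ j ∈ s, a j ^ 2)‖ ≤ c ^ 2 := by
    apply rho_norm_le π _ (by positivity)
    intro t
    rw [ContinuousMap.sum_apply, abs_of_nonneg]
    · simpa using h t
    · exact Finset.sum_nonneg fun _ _ => by simp; positivity
  calc _ ≤ ‖v‖ * ‖rho π (∑ j ∈ s, a j ^ 2) v‖ := norm_inner_le_norm _ _
    _ ≤ ‖v‖ * (c ^ 2 * ‖v‖) := by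
        gcongr
        exact (ContinuousLinearMap.le_opNorm _ _).trans (by gcongr)
    _ = _ := by ring

lemma sum_norm_le (π : C(T, ℂ) →⋆ₐ[ℂ] (H →L[ℂ] H)) (P : H →L[ℂ] H) {ι : Type*} (s : Finset ι)
    (a b : ι → C(T, ℝ)) {c d : ℝ} (hc : 0 ≤ c) (hd : 0 ≤ d)
    (ha : ∀ t, ∑ j ∈ s, (a j t) ^ 2 ≤ c ^ 2)
    (hb : ∀ t, ∑ j ∈ s, (b j t) ^ 2 ≤ d ^ 2) :
    ‖∑ j ∈ s, rho π (a j) * P * rho π (b j)‖ ≤ c * d * ‖P‖ := by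
  refine ContinuousLinearMap.opNorm_le_bound _ (by positivity) fun v => ?_
  set A := ∑ j ∈ s, rho π (a j) * P * rho π (b j) with hA
  set u := A v with hu
  have h1 : ‖u‖ ^ 2 ≤ ∑ j ∈ s, ‖rho π (a j) u‖ * (‖P‖ * ‖rho π (b j) v‖) := by
    have : ((‖u‖ ^ 2 : ℝ) : ℂ) = ∑ j ∈ s, inner ℂ (rho π (a j) u) (P (rho π (b j) v)) := by
      have e : inner ℂ u u = ((‖u‖ ^ 2 : ℝ) : ℂ) := by
        rw [inner_self_eq_norm_sq_to_K]; simp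
      rw [← e]
      nth_rewrite 2 [hu]
      rw [hA, sum_apply, inner_sum]
      refine Finset.sum_congr rfl fun j _ => ?_
      rw [mul_apply_eq_comp, mul_apply_eq_comp,
        ← ContinuousLinearMap.adjoint_inner_left, ← ContinuousLinearMap.star_eq_adjoint, rho_star]
    have h3 : ‖((‖u‖ ^ 2 : ℝ) : ℂ)‖ = ‖u‖ ^ 2 := by
      rw [Complex.norm_real, Real.norm_of_nonneg (by positivity)]
    rw [← h3, this]
    refine (norm_sum_le _ _).trans (Finset.sum_le_sum fun j _ => ?_)
    refine (norm_inner_le_norm _ _).trans ?_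
    gcongr
    exact P.le_opNorm _
  have h2 : ∑ j ∈ s, ‖rho π (a j) u‖ * (‖P‖ * ‖rho π (b j) v‖)
      ≤ ‖P‖ * ((c * ‖u‖) * (d * ‖v‖)) := by
    have : ∑ j ∈ s, ‖rho π (a j) u‖ * (‖P‖ * ‖rho π (b j) v‖)
        = ‖P‖ * ∑ j ∈ s, ‖rho π (a j) u‖ * ‖rho π (b j) v‖ := by
      rw [Finset.mul_sum]; exact Finset.sum_congr rfl fun j _ => by ring
    rw [this]
    gcongr
    refine (Real.sum_mul_le_sqrt_mul_sqrt s _ _).trans ?_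
    gcongr
    · rw [Real.sqrt_le_left (by positivity), mul_pow]
      exact rho_sum_sq π s a ha u
    · rw [Real.sqrt_le_left (by positivity), mul_pow]
      exact rho_sum_sq π s b hb v
  by_cases hu0 : ‖u‖ = 0
  · rw [hu0]; positivity
  · have hpos : 0 < ‖u‖ := lt_of_le_of_ne (norm_nonneg _) (Ne.symm hu0)
    refine le_of_mul_le_mul_left ?_ hpos
    calc ‖u‖ * ‖u‖ = ‖u‖ ^ 2 := by ring
      _ ≤ _ := h1.trans h2
      _ = _ := by ring

/-! Compact operators -/

lemma cpt_mul_left {K : H →L[ℂ] H} (A : H →L[ℂ] H) (hK : IsCompactOperator ⇑K) :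
    IsCompactOperator ⇑(A * K) := hK.clm_comp A

lemma cpt_mul_right {K : H →L[ℂ] H} (A : H →L[ℂ] H) (hK : IsCompactOperator ⇑K) :
    IsCompactOperator ⇑(K * A) := hK.comp_clm A

lemma cpt_add {K L : H →L[ℂ] H} (hK : IsCompactOperator ⇑K) (hL : IsCompactOperator ⇑L) :
    IsCompactOperator ⇑(K + L) := hK.add hL

lemma cpt_sub {K L : H →L[ℂ] H} (hK : IsCompactOperator ⇑K) (hL : IsCompactOperator ⇑L) :
    IsCompactOperator ⇑(K - L) := hK.sub hL

lemma cpt_sum {ι : Type*} (s : Finset ι) (K : ι → H →L[ℂ] H)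
    (hK : ∀ i ∈ s, IsCompactOperator ⇑(K i)) : IsCompactOperator ⇑(∑ i ∈ s, K i) :=
  Submodule.sum_mem (compactOperator (RingHom.id ℂ) H H) hK

/-- clamp to `[0,1]` -/
noncomputable def cl (x : ℝ) : ℝ := max 0 (min 1 x)

lemma cl_cont : Continuous cl := by unfold cl; fun_prop
lemma cl_nonneg (x : ℝ) : 0 ≤ cl x := le_max_left _ _
lemma cl_le_one (x : ℝ) : cl x ≤ 1 := max_le zero_le_one (min_le_left _ _)
lemma cl_mono {x y : ℝ} (h : x ≤ y) : cl x ≤ cl y := by unfold cl; gcongr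
lemma cl_zero {x : ℝ} (h : x ≤ 0) : cl x = 0 :=
  max_eq_left ((min_le_right _ _).trans h)
lemma cl_one {x : ℝ} (h : 1 ≤ x) : cl x = 1 := by
  unfold cl; rw [min_eq_left h]; simp

/-- small bumps -/
noncomputable def ee (F : C(T, ℝ)) (j : ℕ) : C(T, ℝ) :=
  ⟨fun t => cl (F t - j + 1) - cl (F t - j), by
    have := cl_cont; fun_prop⟩

/-- large bumps -/
noncomputable def gg (F : C(T, ℝ)) (j : ℕ) : C(T, ℝ) :=
  ⟨fun t => cl (F t - j + 3) - cl (F t - j - 2), by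
    have := cl_cont; fun_prop⟩

lemma ee_nonneg (F : C(T, ℝ)) (j : ℕ) (t : T) : 0 ≤ ee F j t :=
  sub_nonneg.2 (cl_mono (by linarith))
lemma ee_le (F : C(T, ℝ)) (j : ℕ) (t : T) : ee F j t ≤ 1 := by
  have := cl_le_one (F t - j + 1); have := cl_nonneg (F t - j)
  change cl _ - cl _ ≤ 1; linarith
lemma gg_nonneg (F : C(T, ℝ)) (j : ℕ) (t : T) : 0 ≤ gg F j t :=
  sub_nonneg.2 (cl_mono (by linarith))
lemma gg_le (F : C(T, ℝ)) (j : ℕ) (t : T) : gg F j t ≤ 1 := by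
  have := cl_le_one (F t - j + 3); have := cl_nonneg (F t - j - 2)
  change cl _ - cl _ ≤ 1; linarith
lemma ee_supp (F : C(T, ℝ)) (j : ℕ) (t : T) (h : 1 < |F t - j|) : ee F j t = 0 := by
  change cl _ - cl _ = 0
  rcases lt_abs.1 h with h | h
  · rw [cl_one (by linarith), cl_one (by linarith)]; simp
  · rw [cl_zero (by linarith), cl_zero (by linarith)]; simp
lemma gg_supp (F : C(T, ℝ)) (j : ℕ) (t : T) (h : 3 < |F t - j|) : gg F j t = 0 := by
  change cl _ - cl _ = 0
  rcases lt_abs.1 h with h | h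
  · rw [cl_one (by linarith), cl_one (by linarith)]; simp
  · rw [cl_zero (by linarith), cl_zero (by linarith)]; simp
lemma gg_one (F : C(T, ℝ)) (j : ℕ) (t : T) (h : |F t - j| < 2) : gg F j t = 1 := by
  change cl _ - cl _ = 1
  have := abs_lt.1 h
  rw [cl_one (by linarith), cl_zero (by linarith)]; simp

lemma ee_sum (F : C(T, ℝ)) (n : ℕ) (t : T) (h0 : 0 ≤ F t) (h1 : F t ≤ n) :
    ∑ j ∈ Finset.range (n + 1), ee F j t = 1 := by
  have : ∀ j : ℕ, ee F j t = (fun i : ℕ => cl (F t - i + 1)) j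
      - (fun i : ℕ => cl (F t - i + 1)) (j + 1) := by
    intro j; change cl _ - cl _ = _; simp only; congr 2; push_cast; ring
  simp_rw [this]
  rw [Finset.sum_range_sub', cl_one (by simpa using h0), cl_zero (by push_cast; linarith)]
  simp

lemma gg_sum (F : C(T, ℝ)) (N : ℕ) (t : T) :
    ∑ j ∈ Finset.range N, gg F j t ≤ 5 := by
  have tele : ∀ a : ℝ, ∑ j ∈ Finset.range N, (cl (F t - j + a) - cl (F t - j + a - 1)) ≤ 1 := by
    intro a
    have : ∀ j : ℕ, cl (F t - j + a) - cl (F t - j + a - 1) = (fun i : ℕ => cl (F t - i + a)) j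
        - (fun i : ℕ => cl (F t - i + a)) (j + 1) := by
      intro j; simp only; congr 2; push_cast; ring
    simp_rw [this]
    rw [Finset.sum_range_sub']
    linarith [cl_le_one (F t - (0 : ℕ) + a), cl_nonneg (F t - N + a)]
  have e : ∀ j : ℕ, gg F j t = (cl (F t - j + 3) - cl (F t - j + 3 - 1))
      + (cl (F t - j + 2) - cl (F t - j + 2 - 1)) + (cl (F t - j + 1) - cl (F t - j + 1 - 1))
      + (cl (F t - j + 0) - cl (F t - j + 0 - 1))
      + (cl (F t - j + (-1)) - cl (F t - j + (-1) - 1)) := by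
    intro j
    change cl _ - cl _ = _
    ring_nf
  simp_rw [e, Finset.sum_add_distrib]
  linarith [tele 3, tele 2, tele 1, tele 0, tele (-1)]

lemma approx (π : C(T, ℂ) →⋆ₐ[ℂ] (H →L[ℂ] H)) (P : H →L[ℂ] H)
    (hP : ∀ φ ψ : C(T, ℂ), Disjoint (tsupport φ) (tsupport ψ) →
      IsCompactOperator ⇑((π φ).comp (P.comp (π ψ))))
    (F : C(T, ℝ)) (n : ℕ) (h0 : ∀ t, 0 ≤ F t) (h1 : ∀ t, F t ≤ n) :
    ∃ R : H →L[ℂ] H, ‖R‖ ≤ 10 * ‖P‖ ∧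
      IsCompactOperator ⇑(rho π F * P - P * rho π F - R) := by
  have hP' : ∀ (j : ℕ) (φ ψ : C(T, ℝ)), (∀ t, 1 < |F t - j| → φ t = 0) →
      (∀ t, |F t - j| < 2 → ψ t = 0) → IsCompactOperator ⇑(rho π φ * P * rho π ψ) := by
    intro j φ ψ hφ hψ
    refine hP (ofRealCM.comp φ) (ofRealCM.comp ψ) ?_
    rw [tsupport_ofReal, tsupport_ofReal]
    have s1 : tsupport φ ⊆ {t | |F t - j| ≤ 1} := by
      refine closure_minimal (fun t ht => ?_) (isClosed_le (by fun_prop) (by fun_prop))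
      by_contra hc
      exact ht (hφ t (not_le.1 hc))
    have s2 : tsupport ψ ⊆ {t | 2 ≤ |F t - j|} := by
      refine closure_minimal (fun t ht => ?_) (isClosed_le (by fun_prop) (by fun_prop))
      by_contra hc
      exact ht (hψ t (not_le.1 hc))
    refine Set.disjoint_of_subset s1 s2 (Set.disjoint_left.2 fun t ht ht' => ?_)
    have a1 : |F t - j| ≤ 1 := ht
    have a2 : 2 ≤ |F t - j| := ht'
    linarith
  let D : ℕ → C(T, ℝ) := fun j => F - ((j : ℕ) : C(T, ℝ))
  have hD : ∀ j t, D j t = F t - j := fun j t => by simp [D]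
  refine ⟨∑ j ∈ Finset.range (n + 1), rho π (ee F j * D j) * P * rho π (gg F j)
    - ∑ j ∈ Finset.range (n + 1), rho π (ee F j) * P * rho π (D j * gg F j), ?_, ?_⟩
  · refine (norm_sub_le _ _).trans ?_
    have e1 : ∀ t, ∑ j ∈ Finset.range (n + 1), (ee F j t) ^ 2 ≤ 1 ^ 2 := by
      intro t
      rw [one_pow, ← ee_sum F n t (h0 t) (h1 t)]
      refine Finset.sum_le_sum fun j _ => ?_
      nlinarith [ee_nonneg F j t, ee_le F j t]
    have e2 : ∀ t, ∑ j ∈ Finset.range (n + 1), ((ee F j * D j) t) ^ 2 ≤ 1 ^ 2 := by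
      intro t
      refine le_trans (Finset.sum_le_sum fun j _ => ?_) (e1 t)
      rw [ContinuousMap.mul_apply, hD]
      by_cases hc : 1 < |F t - j|
      · rw [ee_supp F j t hc]; simp
      · have : (F t - j) ^ 2 ≤ 1 := by rw [sq_le_one_iff_abs_le_one]; exact not_lt.1 hc
        rw [mul_pow]
        exact mul_le_of_le_one_right (sq_nonneg _) this
    have e3 : ∀ t, ∑ j ∈ Finset.range (n + 1), (gg F j t) ^ 2 ≤ 5 := by
      intro t
      refine le_trans (Finset.sum_le_sum fun j _ => ?_) (gg_sum F (n + 1) t)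
      nlinarith [gg_nonneg F j t, gg_le F j t]
    have e4 : ∀ t, ∑ j ∈ Finset.range (n + 1), ((D j * gg F j) t) ^ 2 ≤ 7 ^ 2 := by
      intro t
      have : ∑ j ∈ Finset.range (n + 1), ((D j * gg F j) t) ^ 2
          ≤ 9 * ∑ j ∈ Finset.range (n + 1), (gg F j t) ^ 2 := by
        rw [Finset.mul_sum]
        refine Finset.sum_le_sum fun j _ => ?_
        rw [ContinuousMap.mul_apply, hD]
        by_cases hc : 3 < |F t - j|
        · rw [gg_supp F j t hc]; simp
        · have : (F t - j) ^ 2 ≤ 9 := by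
            rw [← sq_abs]; nlinarith [not_lt.1 hc, abs_nonneg (F t - j)]
          rw [mul_pow]
          gcongr
      linarith [e3 t]
    have b1 := sum_norm_le π P (Finset.range (n + 1)) (fun j => ee F j * D j) (fun j => gg F j)
      zero_le_one (by norm_num : (0 : ℝ) ≤ 3) e2 (fun t => (e3 t).trans (by norm_num))
    have b2 := sum_norm_le π P (Finset.range (n + 1)) (fun j => ee F j) (fun j => D j * gg F j)
      zero_le_one (by norm_num : (0 : ℝ) ≤ 7) e1 e4
    linarith
  · have hsum : ∑ j ∈ Finset.range (n + 1), rho π (ee F j) = 1 := by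
      rw [← map_sum, ← map_one (rho π)]
      congr 1
      ext t
      rw [ContinuousMap.sum_apply, ee_sum F n t (h0 t) (h1 t)]; rfl
    have : rho π F * P - P * rho π F -
        (∑ j ∈ Finset.range (n + 1), rho π (ee F j * D j) * P * rho π (gg F j)
        - ∑ j ∈ Finset.range (n + 1), rho π (ee F j) * P * rho π (D j * gg F j))
        = ∑ j ∈ Finset.range (n + 1), (rho π (ee F j * F) * P * rho π (1 - gg F j)
          - rho π (ee F j) * P * rho π (F * (1 - gg F j))) := by
      have a1 : rho π F * P - P * rho π F = ∑ j ∈ Finset.range (n + 1),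
          rho π (ee F j) * (rho π F * P - P * rho π F) := by
        rw [← Finset.sum_mul, hsum, one_mul]
      rw [a1, ← Finset.sum_sub_distrib, ← Finset.sum_sub_distrib]
      refine Finset.sum_congr rfl fun j _ => ?_
      simp only [D, map_mul, map_sub, map_one, map_natCast]
      have c := Nat.cast_commute j (P * rho π (gg F j))
      have c' : rho π (ee F j) * (j : H →L[ℂ] H) * P * rho π (gg F j)
          = rho π (ee F j) * P * ((j : H →L[ℂ] H) * rho π (gg F j)) := by
        have c2 := (Nat.cast_commute j P).eq
        calc _ = rho π (ee F j) * ((j : H →L[ℂ] H) * P) * rho π (gg F j) := by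
              simp only [mul_assoc]
          _ = _ := by rw [c2]; simp only [mul_assoc]
      have expand : ∀ e f d p g : H →L[ℂ] H, e * d * p * g = e * p * (d * g) →
          e * (f * p - p * f) - (e * (f - d) * p * g - e * p * ((f - d) * g))
          = e * f * p * (1 - g) - e * p * (f * (1 - g)) := by
        intro e f d p g h
        have : e * (f * p - p * f) - (e * (f - d) * p * g - e * p * ((f - d) * g))
          = e * f * p * (1 - g) - e * p * (f * (1 - g))
            + (e * d * p * g - e * p * (d * g)) := by noncomm_ring
        rw [this, h]; simp
      exact expand _ _ _ _ _ c'
    rw [this]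
    refine cpt_sum _ _ fun j _ => cpt_sub (hP' j _ _ ?_ ?_) (hP' j _ _ ?_ ?_)
    · intro t ht; simp [ee_supp F j t ht]
    · intro t ht; simp [gg_one F j t ht]
    · intro t ht; exact ee_supp F j t ht
    · intro t ht; simp [gg_one F j t ht]

lemma commutator (π : C(T, ℂ) →⋆ₐ[ℂ] (H →L[ℂ] H)) (P : H →L[ℂ] H)
    (hP : ∀ φ ψ : C(T, ℂ), Disjoint (tsupport φ) (tsupport ψ) →
      IsCompactOperator ⇑((π φ).comp (P.comp (π ψ))))
    (f : C(T, ℝ)) (h0 : ∀ t, 0 ≤ f t) (h1 : ∀ t, f t ≤ 1) :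
    IsCompactOperator ⇑(rho π f * P - P * rho π f) := by
  have hcl : IsClosed {A : H →L[ℂ] H | IsCompactOperator ⇑A} := isClosed_setOfPred_isCompactOperator
  change _ ∈ {A : H →L[ℂ] H | IsCompactOperator ⇑A}
  rw [← hcl.closure_eq, Metric.mem_closure_iff]
  intro ε hε
  obtain ⟨n, hn⟩ := exists_nat_gt (10 * ‖P‖ / ε)
  have hn0 : (0 : ℝ) < n := lt_of_le_of_lt (by positivity) hn
  obtain ⟨R, hR, hK⟩ := approx π P hP ((n : C(T, ℝ)) * f) n
    (fun t => by simpa using mul_nonneg hn0.le (h0 t))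
    (fun t => by simpa using mul_le_of_le_one_right hn0.le (h1 t))
  have hc : IsCompactOperator ⇑(((n : ℂ)⁻¹) • (rho π ((n : C(T, ℝ)) * f) * P
      - P * rho π ((n : C(T, ℝ)) * f) - R)) := hK.smul ((n : ℂ)⁻¹)
  refine ⟨_, hc, ?_⟩
  have e : rho π ((n : C(T, ℝ)) * f) = (n : ℂ) • rho π f := by
    rw [map_mul, map_natCast, ← nsmul_eq_mul, Nat.cast_smul_eq_nsmul]
  have hnC : (n : ℂ) ≠ 0 := by exact_mod_cast hn0.ne'
  have : ((n : ℂ)⁻¹) • (rho π ((n : C(T, ℝ)) * f) * P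
      - P * rho π ((n : C(T, ℝ)) * f) - R) = rho π f * P - P * rho π f - (n : ℂ)⁻¹ • R := by
    rw [e, smul_mul_assoc, mul_smul_comm, ← smul_sub, smul_sub, smul_smul, inv_mul_cancel₀ hnC,
      one_smul]
  rw [this, dist_eq_norm, sub_sub_cancel, norm_smul, norm_inv, Complex.norm_natCast]
  rw [div_lt_iff₀ hε] at hn
  rw [inv_mul_lt_iff₀ hn0]
  linarith

lemma fredholm_of_local (π : C(T, ℂ) →⋆ₐ[ℂ] (H →L[ℂ] H)) (P : H →L[ℂ] H)
    (hP : ∀ φ ψ : C(T, ℂ), Disjoint (tsupport φ) (tsupport ψ) →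
      IsCompactOperator ⇑((π φ).comp (P.comp (π ψ))))
    (hloc : ∀ x : T, LocallyInvertibleAt π P x) : IsFredholm P := by
  choose V hV Q₁ Q₂ hQ using hloc
  obtain ⟨s, -, hs⟩ := isCompact_univ.elim_nhds_subcover (fun x => interior (V x))
    (fun x _ => interior_mem_nhds.2 (hV x))
  obtain ⟨f, hf⟩ := PartitionOfUnity.exists_isSubordinate (X := T) isClosed_univ
    (fun i : s => interior (V i)) (fun i => isOpen_interior) (by
      intro t ht
      obtain ⟨x, hx, hxt⟩ := Set.mem_iUnion₂.1 (hs ht)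
      exact Set.mem_iUnion.2 ⟨⟨x, hx⟩, hxt⟩)
  have hq : ∀ i : s, Q₁ i * (P * rho π (f i)) = rho π (f i) ∧
      rho π (f i) * (P * Q₂ i) = rho π (f i) := fun i =>
    hQ i (ofRealCM.comp (f i)) (by
      rw [tsupport_ofReal]; exact (hf i).trans interior_subset)
  have hsum : ∑ i : s, rho π (f i) = 1 := by
    rw [← map_sum, ← map_one (rho π)]
    congr 1
    ext t
    rw [ContinuousMap.sum_apply, ← finsum_eq_sum_of_fintype, f.sum_eq_one (Set.mem_univ t)]; rfl
  have hcomm : ∀ i : s, IsCompactOperator ⇑(rho π (f i) * P - P * rho π (f i)) := fun i =>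
    commutator π P hP (f i) (fun t => f.nonneg i t) (fun t => f.le_one i t)
  set S₁ := ∑ i : s, Q₁ i * rho π (f i) with hS₁
  set S₂ := ∑ i : s, rho π (f i) * Q₂ i with hS₂
  have k1 : IsCompactOperator ⇑(S₁ * P - 1) := by
    have : S₁ * P - 1 = ∑ i : s, Q₁ i * (rho π (f i) * P - P * rho π (f i)) := by
      simp only [mul_sub, Finset.sum_sub_distrib, (hq _).1, hsum]
      rw [hS₁, Finset.sum_mul]; simp only [mul_assoc]
    rw [this]
    exact cpt_sum _ _ fun i _ => cpt_mul_left _ (hcomm i)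
  have k2 : IsCompactOperator ⇑(1 - P * S₂) := by
    have : 1 - P * S₂ = ∑ i : s, (rho π (f i) * P - P * rho π (f i)) * Q₂ i := by
      simp only [sub_mul, Finset.sum_sub_distrib, mul_assoc, (hq _).2, hsum]
      rw [hS₂, Finset.mul_sum]
    rw [this]
    exact cpt_sum _ _ fun i _ => cpt_mul_right _ (hcomm i)
  refine ⟨S₁, k1, ?_⟩
  change IsCompactOperator ⇑(P * S₁ - 1)
  have : P * S₁ - 1 = P * S₁ * (1 - P * S₂) + P * ((S₁ * P - 1) * S₂) - (1 - P * S₂) := by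
    noncomm_ring
  rw [this]
  exact cpt_sub (cpt_add (cpt_mul_left _ k2) (cpt_mul_left _ (cpt_mul_right _ k1))) k2

lemma small (π : C(T, ℂ) →⋆ₐ[ℂ] (H →L[ℂ] H)) (hπ : StrongConvergenceToZero π)
    (K : H →L[ℂ] H) (hK : IsCompactOperator ⇑K) (x : T) (ε : ℝ) (hε : 0 < ε) :
    ∃ V ∈ 𝓝 x, ∀ χ : C(T, ℝ), (∀ t, χ t ∈ Set.Icc (0 : ℝ) 1) →
      (∀ᶠ t in 𝓝 x, χ t = 1) → tsupport χ ⊆ V → ‖rho π χ * K‖ ≤ ε := by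
  have hc := IsCompactOperator.isCompact_closure_image_closedBall (f := (K : H →ₗ[ℂ] H)) hK 1
  obtain ⟨N, -, hN, hcov⟩ := hc.finite_cover_balls (half_pos hε)
  choose V hV hVχ using fun h : H => hπ x h (ε / 2) (half_pos hε)
  refine ⟨⋂ h ∈ N, V h, (Filter.biInter_mem hN).2 fun h _ => hV h, fun χ h01 hone hsupp => ?_⟩
  have hχ : ‖rho π χ‖ ≤ 1 := rho_norm_le π χ zero_le_one fun t => by
    rw [abs_of_nonneg (h01 t).1]; exact (h01 t).2
  refine ContinuousLinearMap.opNorm_le_of_unit_norm (𝕜 := ℂ) hε.le fun v hv => ?_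
  have hmem : K v ∈ closure (⇑(K : H →ₗ[ℂ] H) '' Metric.closedBall 0 1) :=
    subset_closure ⟨v, by simp [hv], rfl⟩
  obtain ⟨h, hhN, hh⟩ := Set.mem_iUnion₂.1 (hcov hmem)
  have s1 : ‖rho π χ h‖ < ε / 2 :=
    hVχ h χ h01 hone (hsupp.trans (Set.iInter₂_subset h hhN))
  have s2 : ‖rho π χ (K v - h)‖ ≤ ε / 2 := by
    rw [Metric.mem_ball, dist_eq_norm] at hh
    refine (ContinuousLinearMap.le_opNorm _ _).trans ?_
    calc _ ≤ 1 * ‖K v - h‖ := by gcongr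
      _ ≤ _ := by linarith
  have : (rho π χ * K) v = rho π χ (K v - h) + rho π χ h := by
    rw [← map_add, sub_add_cancel]; rfl
  rw [this]
  exact (norm_add_le _ _).trans (by linarith)

lemma local_of_fredholm (π : C(T, ℂ) →⋆ₐ[ℂ] (H →L[ℂ] H)) (hπ : StrongConvergenceToZero π)
    (P : H →L[ℂ] H) (hF : IsFredholm P) (x : T) : LocallyInvertibleAt π P x := by
  obtain ⟨S, hS1, hS2⟩ := hF
  change IsCompactOperator ⇑(S * P - 1) at hS1
  change IsCompactOperator ⇑(P * S - 1) at hS2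
  set K := S * P - 1 with hK
  set L := P * S - 1 with hL
  obtain ⟨V₁, hV₁, hs₁⟩ := small π hπ (star K * K) (cpt_mul_left _ hS1) x (1 / 4) (by norm_num)
  obtain ⟨V₂, hV₂, hs₂⟩ := small π hπ L hS2 x (1 / 4) (by norm_num)
  obtain ⟨W, hW, hWc, hWV⟩ := exists_mem_nhds_isClosed_subset
    (interior_mem_nhds.2 (Filter.inter_mem hV₁ hV₂))
  obtain ⟨χ, hχ1, -, hχs, hχ01⟩ := exists_continuousMap_one_of_isCompact_subset_isOpen
    hWc.isCompact isOpen_interior hWV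
  have hone : ∀ᶠ t in 𝓝 x, χ t = 1 := Filter.mem_of_superset hW fun t ht => hχ1 ht
  have hsub := hχs.trans interior_subset
  have n1 := hs₁ χ hχ01 hone (hsub.trans Set.inter_subset_left)
  have n2 := hs₂ χ hχ01 hone (hsub.trans Set.inter_subset_right)
  have hχn : ‖rho π χ‖ ≤ 1 := rho_norm_le π χ zero_le_one fun t => by
    rw [abs_of_nonneg (hχ01 t).1]; exact (hχ01 t).2
  have n3 : ‖K * rho π χ‖ < 1 := by
    have : ‖K * rho π χ‖ * ‖K * rho π χ‖ ≤ 1 / 4 := by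
      rw [← CStarRing.norm_star_mul_self, star_mul, rho_star]
      calc _ = ‖(rho π χ * (star K * K)) * rho π χ‖ := by simp only [mul_assoc]
        _ ≤ ‖rho π χ * (star K * K)‖ * ‖rho π χ‖ := norm_mul_le _ _
        _ ≤ 1 / 4 * 1 := by gcongr
        _ = _ := by norm_num
    nlinarith [norm_nonneg (K * rho π χ)]
  have u1 : IsUnit (1 + K * rho π χ) := by
    have := isUnit_one_sub_of_norm_lt_one (x := -(K * rho π χ)) (by rwa [norm_neg])
    rwa [sub_neg_eq_add] at this
  have u2 : IsUnit (1 + rho π χ * L) := by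
    have := isUnit_one_sub_of_norm_lt_one (x := -(rho π χ * L)) (by rw [norm_neg]; linarith)
    rwa [sub_neg_eq_add] at this
  obtain ⟨U₁, hU₁⟩ := u1
  obtain ⟨U₂, hU₂⟩ := u2
  refine ⟨W, hW, (↑U₁⁻¹ : H →L[ℂ] H) * S, S * (↑U₂⁻¹ : H →L[ℂ] H), fun f hf => ?_⟩
  have hfχ : ofRealCM.comp χ * f = f := by
    ext t
    by_cases ht : t ∈ W
    · have : χ t = 1 := hχ1 ht
      simp [ofRealCM, this]
    · have : f t = 0 := by
        by_contra h
        exact ht (hf (subset_tsupport _ h))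
      simp [this]
  have hl : rho π χ * π f = π f := by rw [rho_apply, ← map_mul, hfχ]
  have hr : π f * rho π χ = π f := by rw [rho_apply, ← map_mul, mul_comm, hfχ]
  constructor
  · change ↑U₁⁻¹ * S * (P * π f) = π f
    have : S * (P * π f) = U₁ * π f := by
      rw [hU₁, add_mul, mul_assoc K, hl, hK]; noncomm_ring
    rw [mul_assoc, this, Units.inv_mul_cancel_left]
  · change π f * (P * (S * ↑U₂⁻¹)) = π f
    have : π f * P * S = π f * U₂ := by
      rw [hU₂, mul_add, ← mul_assoc _ _ L, hr, hL]; noncomm_ring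
    calc _ = π f * P * S * ↑U₂⁻¹ := by simp only [mul_assoc]
      _ = _ := by rw [this, Units.mul_inv_cancel_right]

end

end Simonenko

/-- **General Simonenko localization principle.**  Let `T` be a compact Hausdorff
space, `H` a complex Hilbert space and `π : C(T) → B(H)` a unital injective
`*`-homomorphism whose image meets the compact operators only in `0`, having the
property of strong convergence to `0`.  If `P ∈ Ψ_T(H)`, i.e. `M_φ P M_ψ` is compact
whenever `φ, ψ ∈ C(T)` have disjoint supports, then `P` is locally invertible on `T`
if, and only if, `P` is Fredholm. -/
theorem simonenko_localization_principle
    {T : Type*} [TopologicalSpace T] [CompactSpace T] [T2Space T]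
    {H : Type*} [NormedAddCommGroup H] [InnerProductSpace ℂ H] [CompleteSpace H]
    (π : C(T, ℂ) →⋆ₐ[ℂ] (H →L[ℂ] H))
    (hπ_inj : Function.Injective π)
    (hπ_noncpt : ∀ f : C(T, ℂ), IsCompactOperator ⇑(π f) → f = 0)
    (hπ_conv : StrongConvergenceToZero π)
    (P : H →L[ℂ] H)
    (hP : ∀ φ ψ : C(T, ℂ), Disjoint (tsupport φ) (tsupport ψ) →
      IsCompactOperator ⇑((π φ).comp (P.comp (π ψ)))) :
    (∀ x : T, LocallyInvertibleAt π P x) ↔ IsFredholm P := by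
  exact ⟨Simonenko.fredholm_of_local π P hP, fun hF x =>
    Simonenko.local_of_fredholm π hπ_conv P hF x⟩
end

section
/- The operator D̂ := Σ_{γ∈Γ} Q(D_γ⊗Id)Q(1⊗R_γ) on H_Γ commutes with the representation T⊗L: D̂∘(T_{γ'}⊗L_{γ'}) = (T_{γ'}⊗L_{γ'})∘D̂ for all γ' ∈ Γ. In particular, D̂ maps the closed subspace H_Γ^{T⊗L} of (T⊗L)-invariant vectors into itself. -/
open Finset

variable {Γ : Type*} [Group Γ] [Fintype Γ]
variable {H : Type*} [NormedAddCommGroup H] [InnerProductSpace ℂ H]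

/-- The operator `1 ⊗ R_γ` on `H_Γ = {u : Γ → H}`: `((1 ⊗ R_γ) u)(γ') = u (γ' γ)`. -/
def Rop (H : Type*) [NormedAddCommGroup H] [InnerProductSpace ℂ H]
    (γ : Γ) : (Γ → H) →ₗ[ℂ] (Γ → H) where
  toFun u := fun γ' => u (γ' * γ)
  map_add' _ _ := rfl
  map_smul' _ _ := rfl

/-- The operator `T_γ ⊗ L_γ` on `H_Γ`: `((T_γ ⊗ L_γ) u)(γ') = T_γ (u (γ⁻¹ γ'))`. -/
def TLop (T : Γ →* (H ≃ₗᵢ[ℂ] H)) (γ : Γ) : (Γ → H) →ₗ[ℂ] (Γ → H) where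
  toFun u := fun γ' => T γ (u (γ⁻¹ * γ'))
  map_add' u v := by funext γ'; simp
  map_smul' c u := by funext γ'; simp

/-- The operator `Q` on `H_Γ`: `(Q u)(γ') = T_{γ'} (u (γ'⁻¹))`. -/
def Qop (T : Γ →* (H ≃ₗᵢ[ℂ] H)) : (Γ → H) →ₗ[ℂ] (Γ → H) where
  toFun u := fun γ' => T γ' (u γ'⁻¹)
  map_add' u v := by funext γ'; simp
  map_smul' c u := by funext γ'; simp

/-- The normalized inner product `⟨u, v⟩ = (1/|Γ|) ∑_γ ⟨u γ, v γ⟩` on `H_Γ`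
(corresponding to the normalized counting measure on `Γ`). -/
noncomputable def innG (u v : Γ → H) : ℂ :=
  (Fintype.card Γ : ℂ)⁻¹ * ∑ γ : Γ, (inner ℂ (u γ) (v γ) : ℂ)

/-- The operator `D ⊗ Id` on `H_Γ`: `((D ⊗ Id) u)(γ) = D (u γ)`. -/
def Dtensor (Γ : Type*) [Group Γ] [Fintype Γ]
    (D : H →L[ℂ] H) : (Γ → H) →ₗ[ℂ] (Γ → H) where
  toFun u := fun γ => D (u γ)
  map_add' u v := by funext γ; simp
  map_smul' c u := by funext γ; simp

/-- The uniformized operator `D̂ = ∑_{γ ∈ Γ} Q (D_γ ⊗ Id) Q (1 ⊗ R_γ)` on `H_Γ`. -/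
def Dhat (T : Γ →* (H ≃ₗᵢ[ℂ] H)) (D : Γ → (H →L[ℂ] H)) :
    (Γ → H) →ₗ[ℂ] (Γ → H) :=
  ∑ γ : Γ, (Qop T).comp ((Dtensor Γ (D γ)).comp ((Qop T).comp (Rop H γ)))

/-- `D̂ = ∑_γ Q (D_γ ⊗ Id) Q (1 ⊗ R_γ)` commutes with the representation `T ⊗ L`;
in particular it maps the subspace of `(T ⊗ L)`-invariant vectors into itself. -/
theorem Dhat_commutes_TL (T : Γ →* (H ≃ₗᵢ[ℂ] H)) (D : Γ → (H →L[ℂ] H)) :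
    (∀ γ' : Γ, (Dhat T D).comp (TLop T γ') = (TLop T γ').comp (Dhat T D)) ∧
    ∀ u : Γ → H, (∀ γ : Γ, TLop T γ u = u) →
      ∀ γ : Γ, TLop T γ (Dhat T D u) = Dhat T D u := by
  have key : ∀ γ' : Γ, (Dhat T D).comp (TLop T γ') = (TLop T γ').comp (Dhat T D) := by
    intro g
    refine LinearMap.ext fun u => funext fun x => ?_
    have hmul : ∀ (a b : Γ) (h : H), T a (T b h) = T (a * b) h := by
      intro a b h
      rw [map_mul]
      rfl
    have hD : ∀ (v : Γ → H) (y : Γ),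
        Dhat T D v y = ∑ γ : Γ, T y (D γ (T y⁻¹ (v (y⁻¹⁻¹ * γ)))) := by
      intro v y
      simp only [Dhat, LinearMap.sum_apply, Finset.sum_apply]
      rfl
    have hT : ∀ (v : Γ → H) (y : Γ), TLop T g v y = T g (v (g⁻¹ * y)) := fun _ _ => rfl
    simp only [LinearMap.comp_apply]
    rw [hT, hD, hD, map_sum]
    refine Finset.sum_congr rfl fun γ _ => ?_
    rw [hT, hmul, hmul]
    simp [mul_assoc]
  refine ⟨key, fun u hu γ => ?_⟩
  have h := LinearMap.congr_fun (key γ) u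
  simp only [LinearMap.comp_apply, hu γ] at h
  exact h.symm
end

section
/- With D̂ := Σ_{γ∈Γ} Q(D_γ⊗Id)Q(1⊗R_γ), one has the identity Q D̂ Q = Σ_{γ∈Γ} (D_γ⊗Id)(T_γ⊗L_γ) as bounded operators on H_Γ. -/
open Finset

variable {Γ : Type*} [Group Γ] [Fintype Γ]
variable {H : Type*} [NormedAddCommGroup H] [InnerProductSpace ℂ H]

/-- `Q D̂ Q = ∑_{γ ∈ Γ} (D_γ ⊗ Id) (T_γ ⊗ L_γ)` as operators on `H_Γ`. -/
theorem Qop_Dhat_Qop_eq (T : Γ →* (H ≃ₗᵢ[ℂ] H)) (D : Γ → (H →L[ℂ] H)) :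
    (Qop T).comp ((Dhat T D).comp (Qop T))
      = ∑ γ : Γ, (Dtensor Γ (D γ)).comp (TLop T γ) := by
  have hQ : ∀ v : Γ → H, Qop T (Qop T v) = v := by
    intro v
    funext g
    change T g (T g⁻¹ (v g⁻¹⁻¹)) = v g
    have h : (T g * T g⁻¹) (v g⁻¹⁻¹) = v g := by
      rw [← map_mul, mul_inv_cancel, map_one, inv_inv]
      rfl
    exact h
  have hR : ∀ (γ : Γ) (u : Γ → H), Qop T (Rop H γ (Qop T u)) = TLop T γ u := by
    intro γ u
    funext g
    change T g (T (g⁻¹ * γ) (u (g⁻¹ * γ)⁻¹)) = T γ (u (γ⁻¹ * g))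
    have h : (T g * T (g⁻¹ * γ)) (u (g⁻¹ * γ)⁻¹) = T γ (u (γ⁻¹ * g)) := by
      rw [← map_mul, mul_inv_cancel_left, mul_inv_rev, inv_inv]
    exact h
  refine LinearMap.ext fun u => ?_
  simp only [Dhat, LinearMap.comp_apply, LinearMap.sum_apply, map_sum, hQ, hR]
end

section
/- (Uniformization) Let 𝒟 := Σ_{γ∈Γ} D_γ T_γ ∈ B(H) and D̂ := Σ_{γ∈Γ} Q(D_γ⊗Id)Q(1⊗R_γ) ∈ B(H_Γ). Then D̂∘(Q∘V) = (Q∘V)∘𝒟. Consequently, under the unitary isomorphism Q∘V : H ≅ H_Γ^{T⊗L}, the restriction of D̂ to the subspace of (T⊗L)-invariant vectors is unitarily equivalent to 𝒟. -/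
open Finset

variable {Γ : Type*} [Group Γ] [Fintype Γ]
variable {H : Type*} [NormedAddCommGroup H] [InnerProductSpace ℂ H]

/-- The map `V : H → H_Γ`, `(V s)(γ) = s`. -/
def Vop (Γ H : Type*) [Group Γ] [Fintype Γ]
    [NormedAddCommGroup H] [InnerProductSpace ℂ H] : H →ₗ[ℂ] (Γ → H) where
  toFun s := fun _ => s
  map_add' _ _ := rfl
  map_smul' _ _ := rfl

/-- The `Γ`-operator `𝒟 = ∑_{γ ∈ Γ} D_γ T_γ` on `H`. -/
def Dop (T : Γ →* (H ≃ₗᵢ[ℂ] H)) (D : Γ → (H →L[ℂ] H)) : H →ₗ[ℂ] H :=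
  ∑ γ : Γ, ((D γ) : H →ₗ[ℂ] H).comp ((T γ).toLinearEquiv : H →ₗ[ℂ] H)

/-- **Uniformization.**  `D̂ ∘ (Q ∘ V) = (Q ∘ V) ∘ 𝒟`; consequently, under the
unitary isomorphism `Q ∘ V : H ≅ H_Γ^{T⊗L}`, the restriction of `D̂` to the
subspace of `(T ⊗ L)`-invariant vectors is unitarily equivalent to `𝒟`. -/
theorem Dhat_comp_QV_eq_QV_comp_Dop (T : Γ →* (H ≃ₗᵢ[ℂ] H)) (D : Γ → (H →L[ℂ] H)) :
    (Dhat T D).comp ((Qop T).comp (Vop Γ H))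
      = ((Qop T).comp (Vop Γ H)).comp (Dop T D) := by
  ext s γ'
  have key : ∀ γ : Γ, T γ' ((D γ) (T γ'⁻¹ (T (γ'⁻¹⁻¹ * γ) s))) = T γ' ((D γ) (T γ s)) := by
    intro γ
    have h : T γ'⁻¹ (T (γ'⁻¹⁻¹ * γ) s) = T γ s := by
      change (T γ'⁻¹ * T (γ'⁻¹⁻¹ * γ)) s = T γ s
      rw [← map_mul]
      simp
    rw [h]
  have hl : (Dhat T D) (Qop T (Vop Γ H s)) γ'
      = ∑ γ : Γ, T γ' ((D γ) (T γ'⁻¹ (T (γ'⁻¹⁻¹ * γ) s))) := by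
    simp only [Dhat, LinearMap.sum_apply, Finset.sum_apply]
    rfl
  have hr : Qop T (Vop Γ H (Dop T D s)) γ' = ∑ γ : Γ, T γ' ((D γ) (T γ s)) := by
    change T γ' (Dop T D s) = _
    simp only [Dop, LinearMap.sum_apply, map_sum]
    rfl
  change (Dhat T D) (Qop T (Vop Γ H s)) γ' = Qop T (Vop Γ H (Dop T D s)) γ'
  rw [hl, hr]
  exact Finset.sum_congr rfl fun γ _ => key γ
end
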